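/- The kernel of δ equals the K-subalgebra of K[x_1,…,x_{2d}] generated by the set {x_1, x_3, …, x_{2d−1}} ∪ {x_{2i−1}x_{2j} − x_{2i}x_{2j−1} : 1 ≤ i < j ≤ d}. (The Nowicki conjecture.) -/

import Mathlib

open MvPolynomial

namespace Now

set_option linter.unusedSectionVars false
set_option linter.unusedSimpArgs false

section sl2
variable {K V : Type*} [Field K] [CharZero K] [AddCommGroup V] [Module K V]

lemma sl2_comm (E F H : V →ₗ[K] V) (hEF : ∀ g, E (F g) - F (E g) = H g)
    (hHE : ∀ g, H (E g) - E (H g) = (2 : K) • E g) (g : V) (v : K) (hg : H g = v • g) (k : ℕ) :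
    H ((E ^ k) g) = (v + 2 * k) • (E ^ k) g ∧
    (E ^ (k+1)) (F g) = F ((E ^ (k+1)) g) + ((k + 1 : K) * (v + k)) • (E ^ k) g := by
  induction k with
  | zero => 
    refine ⟨by simp [hg], ?_⟩
    have := hEF g
    rw [hg] at this
    simp [← this]
  | succ k ih =>
    obtain ⟨h1, h2⟩ := ih
    have h3 : H ((E ^ (k+1)) g) = (v + 2 * (k+1 : ℕ)) • (E ^ (k+1)) g := by
      rw [pow_succ', Module.End.mul_apply]
      have := hHE ((E ^ k) g)
      rw [h1, map_smul, sub_eq_iff_eq_add] at this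
      rw [this, ← add_smul]
      congr 1
      push_cast; ring
    refine ⟨h3, ?_⟩
    rw [pow_succ' E (k+1), Module.End.mul_apply, h2, map_add, map_smul]
    have := hEF ((E ^ (k+1)) g)
    rw [h3, sub_eq_iff_eq_add] at this
    rw [this, Module.End.mul_apply, pow_succ' E k, Module.End.mul_apply, add_comm _ (F _), add_assoc,
      ← add_smul]
    congr 2
    push_cast; ring

lemma sl2_inj (E F H : V →ₗ[K] V) (hEF : ∀ g, E (F g) - F (E g) = H g)
    (hHE : ∀ g, H (E g) - E (H g) = (2 : K) • E g)
    (hHF : ∀ g, H (F g) - F (H g) = (-2 : K) • F g) (N : ℕ) :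
    ∀ (k : ℕ) (v : ℤ) (g : V), H g = (v : K) • g → v ≤ -k → (E ^ k) g = 0 → (F ^ N) g = 0 →
      g = 0 := by
  induction N with
  | zero => intro k v g _ _ _ h; simpa using h
  | succ N ihN =>
    intro k
    induction k with
    | zero => intro v g _ _ h _; simpa using h
    | succ k ihk =>
      intro v g hg hv hE hF
      have hFg : F g = 0 := by
        refine ihN (k+2) (v-2) (F g) ?_ (by push_cast at hv ⊢; omega) ?_ ?_
        · have := hHF g
          rw [hg, map_smul, sub_eq_iff_eq_add] at this
          rw [this, ← add_smul]; congr 1; push_cast; ring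
        · have := (sl2_comm E F H hEF hHE g v hg (k+1)).2
          rw [this, hE, pow_succ' E (k+1), Module.End.mul_apply, hE]; simp
        · rwa [pow_succ, Module.End.mul_apply] at hF
      have h := (sl2_comm E F H hEF hHE g v hg k).2
      rw [hFg, hE, map_zero, map_zero, zero_add, eq_comm, smul_eq_zero] at h
      rcases h with h | h
      · exfalso
        have h1 : ((k : K) + 1) ≠ 0 := by exact_mod_cast Nat.succ_ne_zero k
        have h2 : ((v : K) + k) ≠ 0 := by
          have : v + (k : ℤ) ≠ 0 := by push_cast at hv; omega
          exact_mod_cast this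
        exact (mul_ne_zero h1 h2) h
      · exact ihk v g hg (by push_cast at hv; omega) h hF
end sl2

section gen
variable {K σ : Type*} [Field K]

lemma nilp_mul {A : Type*} [CommRing A] [Algebra K A] (D : Derivation K A A) (n : ℕ) :
    ∀ (a b : ℕ) (f g : A), a + b = n → (D.toLinearMap ^ a) f = 0 → (D.toLinearMap ^ b) g = 0 →
      (D.toLinearMap ^ n) (f * g) = 0 := by
  induction n with
  | zero =>
    intro a b f g h hf hg
    obtain ⟨rfl, rfl⟩ : a = 0 ∧ b = 0 := by omega
    simp at hf
    simp [hf]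
  | succ n ih =>
    intro a b f g h hf hg
    rcases a with _ | a
    · simp at hf; simp [hf]
    rcases b with _ | b
    · simp at hg; simp [hg]
    rw [pow_succ, Module.End.mul_apply]
    have : D.toLinearMap (f * g) = f * D g + D f * g := by
      simp [mul_comm]
    rw [this, map_add, ih (a+1) b _ _ (by omega) hf, ih a (b+1) _ _ (by omega) _ hg, zero_add]
    · rwa [pow_succ, Module.End.mul_apply] at hf
    · rwa [pow_succ, Module.End.mul_apply] at hg

lemma nilp (D : Derivation K (MvPolynomial σ K) (MvPolynomial σ K))
    (h : ∀ i, D (D (X i)) = 0) (f : MvPolynomial σ K) : ∃ N, (D.toLinearMap ^ N) f = 0 := by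
  induction f using MvPolynomial.induction_on with
  | C a => exact ⟨1, by simp⟩
  | add p q hp hq =>
    obtain ⟨a, ha⟩ := hp
    obtain ⟨b, hb⟩ := hq
    refine ⟨a + b, ?_⟩
    rw [map_add, add_comm a b, pow_add, Module.End.mul_apply, ha, ← pow_add, add_comm b a, pow_add,
      Module.End.mul_apply, hb]; simp
  | mul_X p i hp =>
    obtain ⟨a, ha⟩ := hp
    exact ⟨a + 2, nilp_mul D _ a 2 _ _ rfl ha (by simp [pow_two, h])⟩

lemma notMem_vars [CharZero K] (i : σ) (f : MvPolynomial σ K) (h : pderiv i f = 0) :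
    i ∉ f.vars := by
  classical
  intro hi
  obtain ⟨m, hm, hmi⟩ := (mem_vars_iff_mem_support i).1 hi
  have h1 := coeff_pderiv (i := i) f (m - Finsupp.single i 1)
  have h0 : m i ≠ 0 := by simpa using hmi
  have h2 : m - Finsupp.single i 1 + Finsupp.single i 1 = m := by
    ext j
    by_cases hj : i = j
    · subst hj; simp; omega
    · simp [Finsupp.single_apply, hj]
  rw [h, h2, coeff_zero] at h1
  have h3 := mem_support_iff.1 hm
  rw [eq_comm] at h1
  simp only [nsmul_eq_mul, mul_eq_zero, h3, or_false, false_or] at h1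
  norm_cast at h1

variable (w : σ → ℤ)

lemma comp_comm (L : MvPolynomial σ K →ₗ[K] MvPolynomial σ K) (e : ℤ)
    (hL : ∀ u a, ∃ v, IsWeightedHomogeneous w (monomial u a : MvPolynomial σ K) v ∧
      IsWeightedHomogeneous w (L (monomial u a)) (v + e)) (n : ℤ) (p : MvPolynomial σ K) :
    weightedHomogeneousComponent w (n + e) (L p) = L (weightedHomogeneousComponent w n p) := by
  induction p using MvPolynomial.induction_on' with
  | add p q hp hq => simp [hp, hq]
  | monomial u a =>
    obtain ⟨v, h1, h2⟩ := hL u a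
    rw [weightedHomogeneousComponent_of_mem (n := v) h1,
      weightedHomogeneousComponent_of_mem (n := v + e) h2]
    by_cases h : n = v <;> simp [h]

lemma der_hom (D : Derivation K (MvPolynomial σ K) (MvPolynomial σ K)) (e : ℤ)
    (h : ∀ i, IsWeightedHomogeneous w (D (X i)) (w i + e)) (u : σ →₀ ℕ) (a : K) :
    ∃ v, IsWeightedHomogeneous w (monomial u a : MvPolynomial σ K) v ∧
      IsWeightedHomogeneous w (D (monomial u a)) (v + e) := by
  refine induction_on_monomial (motive := fun p => ∃ v, IsWeightedHomogeneous w p v ∧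
      IsWeightedHomogeneous w (D p) (v + e)) ?_ ?_ u a
  · intro a
    exact ⟨0, isWeightedHomogeneous_C _ _, by
      rw [derivation_C]; exact isWeightedHomogeneous_zero _ _ _⟩
  · rintro p i ⟨v, h1, h2⟩
    refine ⟨v + w i, h1.mul (isWeightedHomogeneous_X _ _ _), ?_⟩
    rw [D.leibniz]
    refine IsWeightedHomogeneous.add ?_ ?_
    · rw [smul_eq_mul, add_assoc]
      exact h1.mul (h i)
    · rw [smul_eq_mul, add_right_comm, mul_comm]
      exact h2.mul (isWeightedHomogeneous_X _ _ _)

lemma der_euler (D : Derivation K (MvPolynomial σ K) (MvPolynomial σ K))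
    (h : ∀ i, D (X i) = (w i : K) • X i) (n : ℤ) (p : MvPolynomial σ K) :
    D (weightedHomogeneousComponent w n p) = (n : K) • weightedHomogeneousComponent w n p := by
  induction p using MvPolynomial.induction_on' with
  | add p q hp hq => simp [hp, hq]
  | monomial u a =>
    obtain ⟨v, h1, h2⟩ : ∃ v : ℤ, IsWeightedHomogeneous w (monomial u a : MvPolynomial σ K) v ∧
        D (monomial u a) = (v : K) • monomial u a := by
      refine induction_on_monomial (motive := fun p => ∃ v : ℤ, IsWeightedHomogeneous w p v ∧
        D p = (v : K) • p) ?_ ?_ u a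
      · intro a
        exact ⟨0, isWeightedHomogeneous_C _ _, by simp⟩
      · rintro p i ⟨v, h1, h2⟩
        refine ⟨v + w i, h1.mul (isWeightedHomogeneous_X _ _ _), ?_⟩
        rw [D.leibniz, h, h2]
        push_cast
        simp only [smul_eq_mul, add_smul, mul_smul_comm]
        rw [add_comm, mul_comm (X i)]
    rw [weightedHomogeneousComponent_of_mem (n := v) h1]
    by_cases h : n = v
    · simp only [h, if_true, h2]
    · simp [h]
end gen

section main
variable {K ι : Type*} [Field K] [CharZero K] [DecidableEq ι]

noncomputable def dE (K : Type*) [Field K] (S : Finset ι) :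
    Derivation K (MvPolynomial (ι × Fin 2) K) (MvPolynomial (ι × Fin 2) K) :=
  mkDerivation K (fun p => if p.1 ∈ S ∧ p.2 = 1 then X (p.1, 0) else 0)

noncomputable def dF (K : Type*) [Field K] (S : Finset ι) :
    Derivation K (MvPolynomial (ι × Fin 2) K) (MvPolynomial (ι × Fin 2) K) :=
  mkDerivation K (fun p => if p.1 ∈ S ∧ p.2 = 0 then X (p.1, 1) else 0)

def wt (S : Finset ι) (p : ι × Fin 2) : ℤ := if p.1 ∈ S then (if p.2 = 0 then 1 else -1) else 0

noncomputable def dH (K : Type*) [Field K] (S : Finset ι) :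
    Derivation K (MvPolynomial (ι × Fin 2) K) (MvPolynomial (ι × Fin 2) K) :=
  mkDerivation K (fun p => (wt S p : K) • X p)

def gens (K : Type*) [Field K] (S : Finset ι) : Set (MvPolynomial (ι × Fin 2) K) :=
  Set.range (fun i : ι => (X (i, 0) : MvPolynomial (ι × Fin 2) K)) ∪
    {p | ∃ i ∈ S, ∃ j ∈ S, p = X (i, 0) * X (j, 1) - X (i, 1) * X (j, 0)}

lemma dEF (S : Finset ι) : ⁅dE K S, dF K S⁆ = dH K S := by
  apply derivation_ext
  rintro ⟨i, c⟩
  rw [Derivation.commutator_apply]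
  fin_cases c <;> by_cases h : i ∈ S <;> simp [dE, dF, dH, wt, mkDerivation_X, h]

lemma dHE (S : Finset ι) : ⁅dH K S, dE K S⁆ = (2 : K) • dE K S := by
  apply derivation_ext
  rintro ⟨i, c⟩
  rw [Derivation.commutator_apply]
  fin_cases c <;> by_cases h : i ∈ S <;> simp [dE, dH, wt, mkDerivation_X, h, two_smul]

lemma dHF (S : Finset ι) : ⁅dH K S, dF K S⁆ = (-2 : K) • dF K S := by
  apply derivation_ext
  rintro ⟨i, c⟩
  rw [Derivation.commutator_apply]
  fin_cases c <;> by_cases h : i ∈ S <;> simp [dF, dH, wt, mkDerivation_X, h, two_smul]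
  ring

lemma comp_E (S : Finset ι) (n : ℤ) (p : MvPolynomial (ι × Fin 2) K) :
    weightedHomogeneousComponent (wt S) (n + 2) (dE K S p) =
      dE K S (weightedHomogeneousComponent (wt S) n p) := by
  refine comp_comm (wt S) (dE K S).toLinearMap 2 (der_hom _ _ _ ?_) n p
  rintro ⟨i, c⟩
  have hz := isWeightedHomogeneous_zero K (wt S)
  by_cases h : i ∈ S
  · fin_cases c
    · simpa [dE, mkDerivation_X] using hz _
    · simp only [dE, mkDerivation_X]
      convert isWeightedHomogeneous_X K (wt S) (i, 0) using 1
      · simp [h]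
      · simp [wt, h]
  · simpa [dE, mkDerivation_X, h] using hz _

lemma comp_Epow (S : Finset ι) (k : ℕ) (n : ℤ) (p : MvPolynomial (ι × Fin 2) K) :
    weightedHomogeneousComponent (wt S) (n + 2 * k) (((dE K S).toLinearMap ^ k) p) =
      ((dE K S).toLinearMap ^ k) (weightedHomogeneousComponent (wt S) n p) := by
  induction k with
  | zero => simp
  | succ k ih =>
    rw [pow_succ', Module.End.mul_apply, Module.End.mul_apply, ← ih]
    have := comp_E S (n + 2 * k) (((dE K S).toLinearMap ^ k) p)
    rw [Derivation.coeFn_coe, ← this]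
    congr 2
    push_cast; ring

lemma comp_Xmul (S : Finset ι) (i : ι) (hi : i ∉ S) (J : ℕ) (n : ℤ)
    (p : MvPolynomial (ι × Fin 2) K) :
    weightedHomogeneousComponent (wt S) n (X (i, 0) ^ J * p) =
      X (i, 0) ^ J * (weightedHomogeneousComponent (wt S) n p) := by
  have := comp_comm (wt S) (LinearMap.mulLeft K (X (i, 0) ^ J : MvPolynomial (ι × Fin 2) K)) 0
    (fun u a => ⟨_, isWeightedHomogeneous_monomial _ _ _ rfl, ?_⟩) n p
  · simpa using this
  · have h1 := ((isWeightedHomogeneous_X K (wt S) (i, 0)).pow J).mul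
      (isWeightedHomogeneous_monomial (wt S) u a rfl)
    simpa [wt, hi, add_comm] using h1

lemma weight_lemma (S : Finset ι) (i : ι) (hi : i ∉ S) (J : ℕ)
    (a b : MvPolynomial (ι × Fin 2) K) (ha : dE K S a = 0)
    (hab : X (i, 0) ^ J * a = ((dE K S).toLinearMap ^ J) b) (n : ℤ) (hn : n < J) :
    weightedHomogeneousComponent (wt S) n a = 0 := by
  obtain ⟨g, hg⟩ : ∃ g, g = weightedHomogeneousComponent (wt S) (n - 2 * J) b := ⟨_, rfl⟩
  have h1 : X (i, 0) ^ J * weightedHomogeneousComponent (wt S) n a =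
      ((dE K S).toLinearMap ^ J) g := by
    rw [hg, ← comp_Epow, ← hab, ← comp_Xmul S i hi]
    congr 2
    ring
  have h2 : ((dE K S).toLinearMap ^ (J + 1)) g = 0 := by
    rw [pow_succ', Module.End.mul_apply, ← h1, Derivation.coeFn_coe, Derivation.leibniz,
      ← comp_E, ha, Derivation.leibniz_pow]
    simp [dE, mkDerivation_X]
  obtain ⟨N, hN⟩ := nilp (dF K S) (by
    rintro ⟨i, c⟩
    by_cases h : i ∈ S <;> fin_cases c <;> simp [dF, mkDerivation_X, h]) g
  have h3 : g = 0 := by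
    refine sl2_inj (dE K S).toLinearMap (dF K S).toLinearMap (dH K S).toLinearMap
      ?_ ?_ ?_ N (J + 1) (n - 2 * J) g ?_ (by push_cast; omega) h2 hN
    · intro g
      have := congrArg (fun D => D g) (dEF (K := K) S)
      simp only [Derivation.commutator_apply] at this
      exact this
    · intro g
      have := congrArg (fun D => D g) (dHE (K := K) S)
      simpa [Derivation.commutator_apply] using this
    · intro g
      have := congrArg (fun D => D g) (dHF (K := K) S)
      simpa [Derivation.commutator_apply] using this
    · rw [hg]
      exact der_euler (wt S) (dH K S) (fun p => by simp [dH, mkDerivation_X]) _ _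
  rw [h3, map_zero] at h1
  exact (mul_eq_zero.1 h1).resolve_left (pow_ne_zero _ (X_ne_zero _))

lemma pd_gens (S : Finset ι) (i : ι) (hi : i ∉ S) (g : MvPolynomial (ι × Fin 2) K)
    (hg : g ∈ Algebra.adjoin K (gens K S)) : pderiv (i, 1) g = 0 := by
  have := Derivation.eqOn_adjoin (R := K) (D1 := pderiv (R := K) (i, (1 : Fin 2))) (D2 := 0)
    (s := gens K S) ?_ hg
  · simpa using this
  · rintro _ (⟨j, rfl⟩ | ⟨j, hj, k, hk, rfl⟩)
    · simp [pderiv_X]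
    · have h1 : i ≠ j := fun h => hi (h ▸ hj)
      have h2 : i ≠ k := fun h => hi (h ▸ hk)
      simp [pderiv_X, h1, h2, Pi.single_apply, h1.symm, h2.symm]

lemma dE_gens (S : Finset ι) (g : MvPolynomial (ι × Fin 2) K)
    (hg : g ∈ Algebra.adjoin K (gens K S)) : dE K S g = 0 := by
  have := Derivation.eqOn_adjoin (R := K) (D1 := dE K S) (D2 := 0)
    (s := gens K S) ?_ hg
  · simpa using this
  · rintro _ (⟨j, rfl⟩ | ⟨j, hj, k, hk, rfl⟩)
    · simp [dE, mkDerivation_X]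
    · simp [dE, mkDerivation_X, hj, hk]
      ring

lemma gens_mono {S T : Finset ι} (h : S ⊆ T) : gens K S ⊆ gens K T := by
  rintro _ (⟨j, rfl⟩ | ⟨j, hj, k, hk, rfl⟩)
  · exact Or.inl ⟨j, rfl⟩
  · exact Or.inr ⟨j, h hj, k, h hk, rfl⟩

/-- Elements that are leading coefficients. -/
noncomputable def G (K : Type*) [Field K] (S : Finset ι) (n : ι) (J : ℕ) :
    Submodule K (MvPolynomial (ι × Fin 2) K) :=
  Submodule.map ((pderiv (R := K) (n, (1 : Fin 2))).toLinearMap ^ J)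
    (Subalgebra.toSubmodule (Algebra.adjoin K (gens K (insert n S))))

lemma pow_pd_mul (p : ι × Fin 2) (c g : MvPolynomial (ι × Fin 2) K) (hc : pderiv p c = 0) (J : ℕ) :
    ((pderiv (R := K) p).toLinearMap ^ J) (c * g) = c * ((pderiv (R := K) p).toLinearMap ^ J) g := by
  induction J with
  | zero => simp
  | succ J ih => simp [pow_succ', ih, hc]

lemma pow_pd_mul' (p : ι × Fin 2) (c g : MvPolynomial (ι × Fin 2) K)
    (hc : pderiv p (pderiv p c) = 0) (J : ℕ) :
    ((pderiv (R := K) p).toLinearMap ^ (J + 1)) (c * g) =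
      c * ((pderiv (R := K) p).toLinearMap ^ (J + 1)) g +
      ((J : K) + 1) • (pderiv p c * ((pderiv (R := K) p).toLinearMap ^ J) g) := by
  induction J with
  | zero => simp [mul_comm]
  | succ J ih =>
    rw [pow_succ', Module.End.mul_apply, ih, map_add, map_smul, Module.End.mul_apply,
      show ((pderiv (R := K) p).toLinearMap ^ (J + 1)) g =
        pderiv p (((pderiv (R := K) p).toLinearMap ^ J) g) by rw [pow_succ', Module.End.mul_apply]; rfl]
    simp only [Derivation.coeFn_coe, Derivation.leibniz, hc, smul_eq_mul, mul_zero, add_zero]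
    push_cast
    simp only [Algebra.smul_def, map_add, map_one]
    ring

lemma G_mul (S : Finset ι) (n : ι) (hn : n ∉ S) (J : ℕ) (c m : MvPolynomial (ι × Fin 2) K)
    (hc : c ∈ gens K S) (hm : m ∈ G K S n J) : c * m ∈ G K S n J := by
  obtain ⟨g, hg, rfl⟩ := hm
  refine ⟨c * g, Subalgebra.mul_mem _
    (Algebra.subset_adjoin (gens_mono (Finset.subset_insert _ _) hc)) hg, ?_⟩
  exact pow_pd_mul _ _ _ (pd_gens S n hn c (Algebra.subset_adjoin hc)) J

lemma G_x (S : Finset ι) (n : ι) (J : ℕ) (i : ι) (hi : i ∈ S) (hn : n ∉ S)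
    (m : MvPolynomial (ι × Fin 2) K)
    (hm : m ∈ G K S n J) (hm0 : pderiv (n, 1) m = 0) : X (i, 0) * m ∈ G K S n (J + 1) := by
  obtain ⟨g, hg, rfl⟩ := hm
  have hne : i ≠ n := fun h => hn (h ▸ hi)
  have hJ : ((J : K) + 1) ≠ 0 := by exact_mod_cast Nat.succ_ne_zero J
  have hc : pderiv (n, (1 : Fin 2)) (X (i, 0) * X (n, 1) - X (i, 1) * X (n, 0)) =
      (X (i, 0) : MvPolynomial (ι × Fin 2) K) := by
    simp [pderiv_X, Pi.single_apply, hne]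
  refine ⟨((J : K) + 1)⁻¹ • ((X (i, 0) * X (n, 1) - X (i, 1) * X (n, 0)) * g), ?_, ?_⟩
  · have hu : (X (i, 0) * X (n, 1) - X (i, 1) * X (n, 0) : MvPolynomial (ι × Fin 2) K) ∈
        gens K (insert n S) := Or.inr ⟨i, by simp [hi], n, by simp, rfl⟩
    exact Subalgebra.smul_mem _ (Subalgebra.mul_mem _ (Algebra.subset_adjoin hu) hg) _
  · rw [map_smul, pow_pd_mul' _ _ _ (by rw [hc]; simp [pderiv_X]), hc, pow_succ',
      Module.End.mul_apply, Derivation.coeFn_coe, hm0, mul_zero, zero_add, smul_smul,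
      inv_mul_cancel₀ hJ, one_smul]

lemma G_monoid (S : Finset ι) (n : ι) (hn : n ∉ S) (m : MvPolynomial (ι × Fin 2) K)
    (hm : m ∈ Submonoid.closure (gens K S)) :
    ∃ w : ℕ, IsWeightedHomogeneous (wt S) m (w : ℤ) ∧ ∀ J ≤ w, m ∈ G K S n J := by
  induction hm using Submonoid.closure_induction_left with
  | one =>
    refine ⟨0, isWeightedHomogeneous_one _ _, fun J hJ => ?_⟩
    obtain rfl : J = 0 := by omega
    exact ⟨1, Subalgebra.one_mem _, by simp⟩
  | mul_left c hc m hm ih =>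
    obtain ⟨w, h1, h2⟩ := ih
    have hm0 : pderiv (n, 1) m = 0 := by
      apply pd_gens S n hn
      rw [← Subalgebra.mem_toSubmodule, Algebra.adjoin_eq_span]
      exact Submodule.subset_span hm
    have hc' := hc
    rcases hc with ⟨i, rfl⟩ | ⟨i, hi, j, hj, rfl⟩
    · by_cases hi : i ∈ S
      · refine ⟨w + 1, ?_, fun J hJ => ?_⟩
        · have := (isWeightedHomogeneous_X K (wt S) (i, 0)).mul h1
          simpa [wt, hi, add_comm] using this
        · rcases Nat.lt_or_ge w J with h | h
          · obtain rfl : J = w + 1 := by omega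
            exact G_x S n w i hi hn m (h2 w le_rfl) hm0
          · exact G_mul S n hn J _ _ hc' (h2 J h)
      · refine ⟨w, ?_, fun J hJ => G_mul S n hn J _ _ hc' (h2 J hJ)⟩
        have := (isWeightedHomogeneous_X K (wt S) (i, 0)).mul h1
        simpa [wt, hi, add_comm] using this
    · refine ⟨w, ?_, fun J hJ => G_mul S n hn J _ _ hc' (h2 J hJ)⟩
      have a1 := (isWeightedHomogeneous_X K (wt S) (i, 0)).mul
        (isWeightedHomogeneous_X K (wt S) (j, 1))
      have a2 := (isWeightedHomogeneous_X K (wt S) (i, 1)).mul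
        (isWeightedHomogeneous_X K (wt S) (j, 0))
      simp only [wt, hi, hj, if_true] at a1 a2
      have := IsWeightedHomogeneous.mul (a1.sub a2) h1
      simpa using this

lemma G_comp (S : Finset ι) (n : ι) (hn : n ∉ S) (a : MvPolynomial (ι × Fin 2) K)
    (ha : a ∈ Algebra.adjoin K (gens K S)) (J : ℕ) (v : ℤ) (hv : J ≤ v) :
    weightedHomogeneousComponent (wt S) v a ∈ G K S n J := by
  rw [← Subalgebra.mem_toSubmodule, Algebra.adjoin_eq_span] at ha
  induction ha using Submodule.span_induction with
  | mem m hm =>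
    obtain ⟨w, h1, h2⟩ := G_monoid S n hn m hm
    rw [weightedHomogeneousComponent_of_mem (n := (w : ℤ)) h1]
    split_ifs with h
    · exact h2 J (by omega)
    · exact Submodule.zero_mem _
  | zero => simp
  | add x y _ _ hx hy => rw [map_add]; exact Submodule.add_mem _ hx hy
  | smul c x _ hx => rw [map_smul]; exact Submodule.smul_mem _ _ hx

noncomputable def ev (K : Type*) [Field K] (n : ι) :
    MvPolynomial (ι × Fin 2) K →ₐ[K] MvPolynomial (ι × Fin 2) K :=
  aeval (fun p => if p = (n, 1) then 0 else X p)

lemma ev_E (S : Finset ι) (n : ι) (hn : n ∉ S) (f : MvPolynomial (ι × Fin 2) K) :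
    ev K n (dE K (insert n S) f) = dE K S (ev K n f) + X (n, 0) * ev K n (pderiv (n, 1) f) := by
  induction f using MvPolynomial.induction_on with
  | C a => simp [ev]
  | add p q hp hq => simp only [map_add, hp, hq]; ring
  | mul_X p i hp =>
    have hX : ev K n (dE K (insert n S) (X i)) =
        dE K S (ev K n (X i)) + X (n, 0) * ev K n (pderiv (n, 1) (X i)) := by
      obtain ⟨i, c⟩ := i
      by_cases h : i = n
      · subst h
        fin_cases c <;> simp [ev, dE, mkDerivation_X, hn, pderiv_X, Pi.single_apply]
      · by_cases h' : i ∈ S <;>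
        fin_cases c <;> simp [ev, dE, mkDerivation_X, h, h', pderiv_X, Pi.single_apply]
    simp only [Derivation.leibniz, map_add, smul_eq_mul, map_mul, hp, hX]
    ring

lemma ev_self (n : ι) (f : MvPolynomial (ι × Fin 2) K) (h : pderiv (n, 1) f = 0) :
    ev K n f = f := by
  have h1 := notMem_vars _ _ h
  have := hom_congr_vars (f₁ := (ev K n : MvPolynomial (ι × Fin 2) K →+* _))
    (f₂ := RingHom.id _) (p₁ := f) (p₂ := f) (by ext; simp) (fun i hi _ => by
      have : i ≠ (n, 1) := fun h => h1 (h ▸ hi)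
      simp [ev, this]) rfl
  simpa using this

lemma pd_comm (p q : ι × Fin 2) (f : MvPolynomial (ι × Fin 2) K) :
    pderiv p (pderiv q f) = pderiv q (pderiv p f) := by
  have : ⁅pderiv (R := K) p, pderiv (R := K) q⁆ = 0 := by
    apply derivation_ext
    intro i
    rw [Derivation.commutator_apply]
    simp only [pderiv_X, Pi.single_apply]
    split_ifs <;> simp
  have := congrArg (fun D => D f) this
  simpa [Derivation.commutator_apply, sub_eq_zero] using this

lemma pd_E (S : Finset ι) (n : ι) (f : MvPolynomial (ι × Fin 2) K) :
    pderiv (n, 1) (dE K S f) = dE K S (pderiv (n, 1) f) := by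
  have : ⁅pderiv (R := K) (n, (1 : Fin 2)), dE K S⁆ = 0 := by
    apply derivation_ext
    intro i
    rw [Derivation.commutator_apply]
    simp only [pderiv_X, Pi.single_apply, dE, mkDerivation_X]
    split_ifs <;> simp [pderiv_X]
  have := congrArg (fun D => D f) this
  simpa [Derivation.commutator_apply, sub_eq_zero] using this

lemma chain (S : Finset ι) (n : ι) (hn : n ∉ S) (f : MvPolynomial (ι × Fin 2) K)
    (hf : dE K (insert n S) f = 0) (J : ℕ) :
    dE K (insert n S) (((pderiv (R := K) (n, (1 : Fin 2))).toLinearMap ^ J) f) = 0 ∧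
    ((dE K S).toLinearMap ^ J) (ev K n f) =
      (-X (n, 0)) ^ J * ev K n (((pderiv (R := K) (n, (1 : Fin 2))).toLinearMap ^ J) f) := by
  induction J with
  | zero => simp [hf]
  | succ J ih =>
    obtain ⟨h1, h2⟩ := ih
    refine ⟨?_, ?_⟩
    · rw [pow_succ', Module.End.mul_apply, Derivation.coeFn_coe, ← pd_E, h1, map_zero]
    · have h3 := ev_E S n hn (((pderiv (R := K) (n, (1 : Fin 2))).toLinearMap ^ J) f)
      rw [h1, map_zero, eq_comm, add_eq_zero_iff_eq_neg] at h3
      rw [pow_succ', Module.End.mul_apply, h2, Derivation.coeFn_coe, Derivation.leibniz,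
        Derivation.leibniz_pow, h3, map_neg (dE K S)]
      have : dE K S (X (n, 0)) = 0 := by simp [dE, mkDerivation_X]
      rw [this]
      simp only [smul_eq_mul, neg_zero, mul_zero, smul_zero, add_zero]
      rw [pow_succ' (pderiv _).toLinearMap, Module.End.mul_apply, Derivation.coeFn_coe]
      ring

lemma pd_pow_zero (p q : ι × Fin 2) (f : MvPolynomial (ι × Fin 2) K) (h : pderiv p f = 0) (k : ℕ) :
    pderiv p (((pderiv (R := K) q).toLinearMap ^ k) f) = 0 := by
  induction k with
  | zero => simpa using h
  | succ k ihk =>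
    rw [pow_succ', Module.End.mul_apply, Derivation.coeFn_coe, pd_comm, ihk, map_zero]

lemma mem_G (S : Finset ι) (n : ι) (hn : n ∉ S) (J : ℕ) (a b : MvPolynomial (ι × Fin 2) K)
    (haE : dE K S a = 0) (haA : a ∈ Algebra.adjoin K (gens K S))
    (c2 : ((dE K S).toLinearMap ^ J) b = (-X (n, 0)) ^ J * a) : a ∈ G K S n J := by
  have hab : X (n, 0) ^ J * a = ((dE K S).toLinearMap ^ J) ((-1 : K) ^ J • b) := by
    rw [map_smul, c2, smul_eq_C_mul, C_pow, C_neg, C_1, ← mul_assoc,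
      ← mul_pow]
    simp
  rw [← sum_weightedHomogeneousComponent (wt S) a]
  refine finsum_induction (fun x => x ∈ G K S n J) (Submodule.zero_mem _)
    (fun x y hx hy => Submodule.add_mem _ hx hy) (fun v => ?_)
  rcases lt_or_ge v (J : ℤ) with hv | hv
  · rw [weight_lemma S n hn J a _ haE hab v hv]
    exact Submodule.zero_mem _
  · exact G_comp S n hn a haA J v hv

theorem key (S : Finset ι) : ∀ f : MvPolynomial (ι × Fin 2) K,
    (∀ i ∉ S, pderiv (i, 1) f = 0) → dE K S f = 0 → f ∈ Algebra.adjoin K (gens K S) := by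
  induction S using Finset.induction_on with
  | empty =>
    intro f hf _
    have : f ∈ supported K (Set.range (fun i : ι => (i, (0 : Fin 2)))) := by
      rw [mem_supported]
      rintro ⟨i, c⟩ hi
      fin_cases c
      · exact ⟨i, rfl⟩
      · exact absurd hi (notMem_vars _ _ (hf i (by simp)))
    rw [supported] at this
    refine Algebra.adjoin_mono ?_ this
    rintro _ ⟨_, ⟨i, rfl⟩, rfl⟩
    exact Or.inl ⟨i, rfl⟩
  | insert n S hn ih =>
    have main : ∀ J : ℕ, ∀ f : MvPolynomial (ι × Fin 2) K,
        ((pderiv (R := K) (n, (1 : Fin 2))).toLinearMap ^ J) f = 0 →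
        (∀ i ∉ insert n S, pderiv (i, 1) f = 0) → dE K (insert n S) f = 0 →
        f ∈ Algebra.adjoin K (gens K (insert n S)) := by
      intro J
      induction J with
      | zero => intro f h _ _; simp at h; rw [h]; exact Subalgebra.zero_mem _
      | succ J ihJ =>
        intro f hJ hf hE
        obtain ⟨a, ha⟩ : ∃ a, a = ((pderiv (R := K) (n, (1 : Fin 2))).toLinearMap ^ J) f :=
          ⟨_, rfl⟩
        have han : pderiv (n, 1) a = 0 := by
          rw [pow_succ', Module.End.mul_apply, Derivation.coeFn_coe, ← ha] at hJ
          exact hJ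
        obtain ⟨c1, c2⟩ := chain S n hn f hE J
        rw [← ha] at c1 c2
        rw [ev_self n a han] at c2
        have haE : dE K S a = 0 := by
          have := ev_E S n hn a
          rw [c1, han, ev_self n a han] at this
          simpa using this.symm
        have hai : ∀ i ∉ S, pderiv (i, 1) a = 0 := by
          intro i hi
          by_cases h : i = n
          · rw [h, han]
          · have h0 := hf i (by simp [h, hi])
            rw [ha, pd_pow_zero _ _ _ h0]
        have haA := ih a hai haE
        have haG : a ∈ G K S n J := mem_G S n hn J a _ haE haA c2
        obtain ⟨g, hg, hga⟩ := haG
        have := ihJ (f - g) (by rw [map_sub, hga, ha, sub_self])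
          (fun i hi => by rw [map_sub, hf i hi, pd_gens _ i hi g hg, sub_zero])
          (by rw [map_sub, hE, dE_gens _ g hg, sub_zero])
        simpa using Subalgebra.add_mem _ this hg
    intro f hf hE
    obtain ⟨N, hN⟩ := nilp (pderiv (R := K) (n, (1 : Fin 2))) (by
      intro i; simp only [pderiv_X, Pi.single_apply]; split_ifs <;> simp) f
    exact main N f hN hf hE
end main
end Now

theorem nowicki_conjecture (K : Type*) [Field K] [CharZero K] (d : ℕ) (hd : 1 ≤ d)
    (δ : Derivation K (MvPolynomial (Fin d × Fin 2) K) (MvPolynomial (Fin d × Fin 2) K))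
    (hδ0 : ∀ i : Fin d, δ (X (i, 0)) = 0)
    (hδ1 : ∀ i : Fin d, δ (X (i, 1)) = X (i, 0)) :
    ∀ f : MvPolynomial (Fin d × Fin 2) K,
      δ f = 0 ↔ f ∈ Algebra.adjoin K
        ((Set.range fun i : Fin d => (X (i, 0) : MvPolynomial (Fin d × Fin 2) K)) ∪
          {p : MvPolynomial (Fin d × Fin 2) K |
            ∃ i j : Fin d, i < j ∧ p = X (i, 0) * X (j, 1) - X (i, 1) * X (j, 0)}) := by
  intro f
  have hE : δ = Now.dE K Finset.univ := by
    apply derivation_ext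
    rintro ⟨i, c⟩
    fin_cases c
    · simpa [Now.dE, mkDerivation_X] using hδ0 i
    · simpa [Now.dE, mkDerivation_X] using hδ1 i
  constructor
  · intro h
    have h1 := Now.key Finset.univ f (by simp) (hE ▸ h)
    refine (Algebra.adjoin_le ?_ : Algebra.adjoin K (Now.gens K Finset.univ) ≤ _) h1
    rintro _ (⟨i, rfl⟩ | ⟨i, -, j, -, rfl⟩)
    · exact Algebra.subset_adjoin (Or.inl ⟨i, rfl⟩)
    · rcases lt_trichotomy i j with hij | rfl | hij
      · exact Algebra.subset_adjoin (Or.inr ⟨i, j, hij, rfl⟩)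
      · have : (X (i, 0) * X (i, 1) - X (i, 1) * X (i, 0) : MvPolynomial (Fin d × Fin 2) K) = 0 := by
          ring
        rw [this]
        exact Subalgebra.zero_mem _
      · have : (X (i, 0) * X (j, 1) - X (i, 1) * X (j, 0) : MvPolynomial (Fin d × Fin 2) K) =
            -(X (j, 0) * X (i, 1) - X (j, 1) * X (i, 0)) := by
          ring
        rw [this]
        exact Subalgebra.neg_mem _ (Algebra.subset_adjoin (Or.inr ⟨j, i, hij, rfl⟩))
  · intro h
    rw [hE]
    refine Now.dE_gens _ f (Algebra.adjoin_mono ?_ h)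
    rintro _ (⟨i, rfl⟩ | ⟨i, j, -, rfl⟩)
    · exact Or.inl ⟨i, rfl⟩
    · exact Or.inr ⟨i, Finset.mem_univ _, j, Finset.mem_univ _, rfl⟩
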